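/- Let ν ≥ −1/2, μ, θ real with sin θ ≠ 0, and let ψ be a smooth rapidly decreasing function on (0,∞). For q ∈ ℕ, one has the shift identity (H^{−θ}_{ν+q+1,μ}(x^q M_{ν,μ,−θ}ψ))(y) = y csc θ · e^{−i(θ−π/2)} · (H^{−θ}_{ν+q,μ}(x^q ψ))(y), where M_{ν,μ,−θ}ψ(x) = −e^{(i/2)x²cot θ} x^{ν−μ} d/dx[e^{−(i/2)x²cot θ} x^{μ−ν} ψ(x)] and H^{−θ}_{λ,μ} is the inverse fractional Hankel transform of order λ. -/

import Mathlib

open MeasureTheory Complex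

/-- Bessel function of the first kind of real order `λ`. -/
noncomputable def besselJ (ν x : ℝ) : ℝ :=
  ∑' m : ℕ, ((-1 : ℝ) ^ m / (m.factorial * Real.Gamma (m + ν + 1))) *
    (x / 2) ^ ((2 * m : ℝ) + ν)

/-- The inverse fractional Hankel transform `H^{−θ}_{λ,μ}` of order `λ`. -/
noncomputable def fracHankelInv (lam μ θ : ℝ) (g : ℝ → ℂ) (y : ℝ) : ℂ :=
  ∫ x in Set.Ioi (0 : ℝ),
    (Complex.exp (-I * ((1 + lam : ℝ) : ℂ) * ((θ - Real.pi / 2 : ℝ) : ℂ)) /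
        ((Real.sin θ ^ (1 + μ) : ℝ) : ℂ)) *
      Complex.exp (-(I / 2) * ((x : ℂ) ^ 2 + (y : ℂ) ^ 2) * (Real.cot θ : ℂ)) *
      (((x * y * (Real.sin θ)⁻¹) ^ (-μ) : ℝ) : ℂ) *
      ((besselJ lam (x * y * (Real.sin θ)⁻¹) : ℝ) : ℂ) *
      ((x ^ (1 + 2 * μ) : ℝ) : ℂ) * g x

/-- The modified differential operator `M_{ν,μ,−θ}`:
`M_{ν,μ,−θ}ψ(x) = −e^{(i/2)x²cot θ} x^{ν−μ} D_x[e^{−(i/2)x²cot θ} x^{μ−ν} ψ(x)]`. -/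
noncomputable def fracMneg (ν μ θ : ℝ) (ψ : ℝ → ℂ) : ℝ → ℂ := fun x =>
  -(Complex.exp ((I / 2) * (x : ℂ) ^ 2 * (Real.cot θ : ℂ)) * (x : ℂ) ^ ((ν - μ : ℝ) : ℂ) *
    deriv (fun t : ℝ =>
      Complex.exp (-(I / 2) * (t : ℂ) ^ 2 * (Real.cot θ : ℂ)) *
        (t : ℂ) ^ ((μ - ν : ℝ) : ℂ) * ψ t) x)

/-!
Let `l = ν + q`, `s = y / sin θ`, `W_l(x) = x ^ (2 * l) 𝒞_l(-(s x / 2)²)` with `𝒞_l` the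
Bessel–Clifford function, and `F(x) = e^{-(i/2) x² cot θ} x ^ (μ - ν) ψ(x)`. Up to one constant
factor, the left side is `-∫ W_{l+1} dF` and the right side is `∫ 2 x W_l F dx`. As
`dW_{l+1} = 2 x W_l dx`, the identity is an integration by parts.

At infinity `ψ` decays rapidly, and `𝒞_l(-w)` grows at most linearly because its energy divided by
`w` is decreasing. At `0` the bounded derivatives give `ψ` a leading term `b x ^ n`, where either
`b ≠ 0` or `n` is as large as desired. If `2 * (l + 1) + μ - ν + n > 0`, both integrands are
integrable and the boundary term vanishes. Otherwise both have a nonzero leading term of exponent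
at most `-1`, so neither is integrable and both Bochner integrals are `0` by convention.
-/

open Set Filter Asymptotics
open scoped Topology

section BesselClifford

/-- The coefficients `1 / (m! Γ(m + l + 1))` of the Bessel–Clifford function. At a pole of `Γ`
Mathlib's `Γ = 0` and `0⁻¹ = 0` give the value `0` of the entire function `1 / Γ`, so the
recurrences below hold for every real `l`. -/
noncomputable def besselCliffordCoeff (l : ℝ) (m : ℕ) : ℝ :=
  (m.factorial * Real.Gamma (m + l + 1))⁻¹

/-- The Bessel–Clifford function `𝒞_l(w) = ∑ wᵐ / (m! Γ(m + l + 1))`, the entire function for which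
`J_l(z) = (z / 2) ^ l * 𝒞_l(-z² / 4)`. -/
noncomputable def besselClifford (l w : ℝ) : ℝ :=
  ∑' m : ℕ, besselCliffordCoeff l m * w ^ m

lemma succ_mul_besselCliffordCoeff_succ (l : ℝ) (m : ℕ) :
    (m + 1) * besselCliffordCoeff l (m + 1) = besselCliffordCoeff (l + 1) m := by
  have hm : (m : ℝ) + 1 ≠ 0 := by positivity
  have harg : (m : ℝ) + 1 + l + 1 = m + (l + 1) + 1 := by ring
  simp only [besselCliffordCoeff, Nat.factorial_succ, Nat.cast_mul, Nat.cast_succ, mul_inv, harg]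
  field_simp

lemma add_mul_besselCliffordCoeff_add_one (l : ℝ) (m : ℕ) :
    (m + l + 1) * besselCliffordCoeff (l + 1) m = besselCliffordCoeff l m := by
  have harg : (m : ℝ) + (l + 1) + 1 = m + l + 1 + 1 := by ring
  simp only [besselCliffordCoeff, harg, mul_inv]
  rcases eq_or_ne ((m : ℝ) + l + 1) 0 with h0 | h0
  · simp [h0]
  · rw [Real.Gamma_add_one h0, mul_inv]
    field_simp

lemma summable_besselClifford (l w : ℝ) :
    Summable fun m : ℕ => besselCliffordCoeff l m * w ^ m := by
  refine summable_of_ratio_norm_eventually_le (r := 1 / 2) (by norm_num) ?_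
  filter_upwards [eventually_ge_atTop ⌈2 * |w|⌉₊, eventually_ge_atTop ⌈-l⌉₊] with m hw hl
  have hw' : 2 * |w| ≤ m + 1 := (Nat.ceil_le.1 hw).trans (by linarith)
  have hl' : 1 ≤ m + l + 1 := by linarith [Nat.ceil_le.1 hl]
  have hprod : 2 * |w| ≤ (m + 1) * (m + l + 1) :=
    hw'.trans (le_mul_of_one_le_right (by positivity) hl')
  have hrec : besselCliffordCoeff l m =
      (m + 1) * (m + l + 1) * besselCliffordCoeff l (m + 1) := by
    rw [← add_mul_besselCliffordCoeff_add_one, ← succ_mul_besselCliffordCoeff_succ]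
    ring
  have hpos : 0 ≤ ((m : ℝ) + 1) * (m + l + 1) := by positivity
  calc ‖besselCliffordCoeff l (m + 1) * w ^ (m + 1)‖
      = 1 / 2 * (2 * |w|) * (|besselCliffordCoeff l (m + 1)| * |w| ^ m) := by
        rw [Real.norm_eq_abs, abs_mul, abs_pow]; ring
    _ ≤ 1 / 2 * ((m + 1) * (m + l + 1)) * (|besselCliffordCoeff l (m + 1)| * |w| ^ m) := by
        gcongr
    _ = 1 / 2 * ‖besselCliffordCoeff l m * w ^ m‖ := by
        rw [hrec, Real.norm_eq_abs, abs_mul, abs_mul, abs_pow, abs_of_nonneg hpos]; ring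

lemma hasDerivAt_besselClifford (l w : ℝ) :
    HasDerivAt (besselClifford l) (besselClifford (l + 1) w) w := by
  set R := |w| + 1
  let termDeriv : ℕ → ℝ → ℝ := fun m y => besselCliffordCoeff l m * (m * y ^ (m - 1))
  have termDeriv_succ (m : ℕ) (y : ℝ) :
      termDeriv (m + 1) y = besselCliffordCoeff (l + 1) m * y ^ m := by
    simp only [termDeriv, ← succ_mul_besselCliffordCoeff_succ, Nat.cast_succ, Nat.add_sub_cancel]
    ring
  have hsummable (y : ℝ) : Summable fun m => termDeriv m y := by
    rw [← summable_nat_add_iff 1]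
    simpa only [termDeriv_succ] using summable_besselClifford (l + 1) y
  have htsum : ∑' m, termDeriv m w = besselClifford (l + 1) w := by
    rw [(hsummable w).tsum_eq_zero_add]
    simp [termDeriv_succ, termDeriv, besselClifford]
  rw [← htsum]
  refine hasDerivAt_tsum_of_isPreconnected (hsummable R).norm Metric.isOpen_ball
    (convex_ball 0 R).isPreconnected (fun m y _ => (hasDerivAt_pow m y).const_mul _)
    (fun m y hy => ?_) (Metric.mem_ball_self (by positivity)) (summable_besselClifford l 0)
    (by simp [R])
  have hyR : |y| ≤ |R| := (mem_ball_zero_iff.1 hy).le.trans (le_abs_self R)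
  simp only [termDeriv, norm_mul, norm_pow, Real.norm_eq_abs]
  gcongr

lemma besselClifford_eq (l w : ℝ) :
    besselClifford l w = (l + 1) * besselClifford (l + 1) w + w * besselClifford (l + 2) w := by
  have hshift (m : ℕ) : ((m + 1 : ℕ) : ℝ) * besselCliffordCoeff (l + 1) (m + 1) * w ^ (m + 1) =
      w * (besselCliffordCoeff (l + 2) m * w ^ m) := by
    rw [Nat.cast_succ, succ_mul_besselCliffordCoeff_succ, show l + 1 + 1 = l + 2 by ring]
    ring
  have hsummable : Summable fun m : ℕ => (m : ℝ) * besselCliffordCoeff (l + 1) m * w ^ m := by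
    rw [← summable_nat_add_iff 1]
    simpa only [hshift] using (summable_besselClifford (l + 2) w).mul_left w
  have htsum : ∑' m : ℕ, (m : ℝ) * besselCliffordCoeff (l + 1) m * w ^ m =
      w * besselClifford (l + 2) w := by
    rw [hsummable.tsum_eq_zero_add, besselClifford, ← tsum_mul_left]
    simp only [Nat.cast_zero, zero_mul, zero_add, hshift]
  rw [← htsum, besselClifford, besselClifford, ← tsum_mul_left,
    ← ((summable_besselClifford (l + 1) w).mul_left _).tsum_add hsummable]
  refine tsum_congr fun m => ?_
  rw [← add_mul_besselCliffordCoeff_add_one]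
  ring

lemma besselClifford_zero (l : ℝ) : besselClifford l 0 = (Real.Gamma (l + 1))⁻¹ := by
  rw [besselClifford, tsum_eq_single 0 fun m hm => by simp [hm]]
  simp [besselCliffordCoeff]

lemma besselClifford_zero_ne_zero {l : ℝ} (hl : -1 < l) : besselClifford l 0 ≠ 0 := by
  rw [besselClifford_zero]
  exact inv_ne_zero (Real.Gamma_pos_of_pos (by linarith)).ne'

lemma besselJ_eq_rpow_mul_besselClifford (l : ℝ) {z : ℝ} (hz : z ≠ 0) :
    besselJ l z = (z / 2) ^ l * besselClifford l (-(z ^ 2 / 4)) := by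
  rw [besselJ, besselClifford, ← tsum_mul_left]
  refine tsum_congr fun m => ?_
  have hpow : (z / 2) ^ (2 * m + l) = (z / 2) ^ l * (z ^ 2 / 4) ^ m := by
    have h := Real.rpow_add_natCast (div_ne_zero hz two_ne_zero) l (2 * m)
    push_cast at h
    rw [add_comm, h, pow_mul]
    ring
  rw [hpow, besselCliffordCoeff, neg_pow (z ^ 2 / 4) m]
  ring

/-- The Lyapunov function `𝒞_l(-w)² + w 𝒞_{l+1}(-w)²` of the Bessel–Clifford equation on the
oscillatory half-line; it controls the growth of `𝒞_l(-w)` as `w → ∞`. -/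
noncomputable def besselEnergy (l w : ℝ) : ℝ :=
  besselClifford l (-w) ^ 2 + w * besselClifford (l + 1) (-w) ^ 2

lemma hasDerivAt_besselEnergy (l w : ℝ) :
    HasDerivAt (besselEnergy l) (-(2 * l + 1) * besselClifford (l + 1) (-w) ^ 2) w := by
  have hC (k : ℝ) :
      HasDerivAt (fun x => besselClifford k (-x)) (-besselClifford (k + 1) (-w)) w := by
    simpa [Function.comp_def] using (hasDerivAt_besselClifford k (-w)).comp w (hasDerivAt_neg w)
  refine (((hC l).pow 2).add ((hasDerivAt_id w).mul ((hC (l + 1)).pow 2))).congr_deriv ?_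
  have hrec := besselClifford_eq l (-w)
  simp only [id, Pi.pow_apply, show l + 1 + 1 = l + 2 by ring]
  push_cast
  linear_combination (2 * besselClifford (l + 1) (-w)) * -hrec

lemma antitoneOn_besselEnergy_div {l : ℝ} (hl : -1 < l) :
    AntitoneOn (fun w => besselEnergy l w / w) (Ioi 0) := by
  have hderiv (w : ℝ) (hw : 0 < w) := (hasDerivAt_besselEnergy l w).div (hasDerivAt_id w) hw.ne'
  refine antitoneOn_of_deriv_nonpos (convex_Ioi 0)
    (fun w hw => (hderiv w hw).continuousAt.continuousWithinAt) ?_ ?_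
  all_goals rw [interior_Ioi]
  · exact fun w hw => (hderiv w hw).differentiableAt.differentiableWithinAt
  · intro w (hw : 0 < w)
    refine (hderiv w hw).deriv.trans_le (div_nonpos_of_nonpos_of_nonneg ?_ (sq_nonneg _))
    have : 0 ≤ (l + 1) * (w * besselClifford (l + 1) (-w) ^ 2) :=
      mul_nonneg (by linarith) (by positivity)
    simp only [id, besselEnergy]
    nlinarith [sq_nonneg (besselClifford l (-w))]

lemma isBigO_besselClifford_neg {l : ℝ} (hl : -1 < l) :
    (fun w => besselClifford l (-w)) =O[atTop] fun w => w := by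
  refine IsBigO.of_pow two_ne_zero (IsBigO.of_bound (besselEnergy l 1) ?_)
  filter_upwards [eventually_ge_atTop 1] with w hw
  have hw0 : 0 < w := one_pos.trans_le hw
  have henergy : besselEnergy l w ≤ besselEnergy l 1 * w := by
    simpa [div_le_iff₀ hw0] using antitoneOn_besselEnergy_div hl (mem_Ioi.2 one_pos) hw0 hw
  have henergy_one : 0 ≤ besselEnergy l 1 := by unfold besselEnergy; positivity
  calc ‖besselClifford l (-w) ^ 2‖ = besselClifford l (-w) ^ 2 := by simp
    _ ≤ besselEnergy l w := le_add_of_nonneg_right (by positivity)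
    _ ≤ besselEnergy l 1 * w := henergy
    _ ≤ besselEnergy l 1 * w ^ 2 := by gcongr; nlinarith
    _ = besselEnergy l 1 * ‖w ^ 2‖ := by simp

end BesselClifford

section RapidlyDecreasing

variable {E : Type*} [NormedAddCommGroup E]

/-- `f` decays at `+∞` faster than every power of `x`. Unlike for `SchwartzMap`, nothing is required
of the derivatives of `f` or of its behaviour elsewhere. -/
def RapidlyDecreasing (f : ℝ → E) : Prop :=
  ∀ r : ℝ, f =O[atTop] fun x => x ^ r

namespace RapidlyDecreasing

lemma of_pow_mul_norm_le {f : ℝ → E}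
    (hf : ∀ k : ℕ, ∃ C : ℝ, ∀ x : ℝ, 0 < x → x ^ k * ‖f x‖ ≤ C) : RapidlyDecreasing f := by
  intro r
  obtain ⟨k, hk⟩ := exists_nat_ge (-r)
  obtain ⟨C, hC⟩ := hf k
  refine .of_bound |C| ?_
  filter_upwards [eventually_ge_atTop 1] with x hx
  have hx0 : 0 < x := one_pos.trans_le hx
  rw [Real.norm_of_nonneg (by positivity)]
  have hpow : 1 ≤ x ^ r * x ^ k := by
    rw [← Real.rpow_add_natCast hx0.ne']
    exact Real.one_le_rpow hx (by linarith)
  calc ‖f x‖ ≤ (x ^ r * x ^ k) * ‖f x‖ := le_mul_of_one_le_left (norm_nonneg _) hpow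
    _ = x ^ r * (x ^ k * ‖f x‖) := mul_assoc _ _ _
    _ ≤ x ^ r * |C| := by
        gcongr
        exact (hC x hx0).trans (le_abs_self C)
    _ = |C| * x ^ r := mul_comm _ _

lemma add {f g : ℝ → E} (hf : RapidlyDecreasing f) (hg : RapidlyDecreasing g) :
    RapidlyDecreasing (f + g) :=
  fun r => (hf r).add (hg r)

lemma mul_left {A : Type*} [NormedRing A] {f g : ℝ → A} {p : ℝ} (hf : RapidlyDecreasing f)
    (hg : g =O[atTop] fun x => x ^ p) : RapidlyDecreasing (g * f) := by
  intro r
  refine (hg.mul (hf (r - p))).trans_eventuallyEq ?_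
  filter_upwards [eventually_gt_atTop 0] with x hx
  rw [← Real.rpow_add hx, add_sub_cancel]

lemma tendsto_zero {f : ℝ → E} (hf : RapidlyDecreasing f) : Tendsto f atTop (𝓝 0) :=
  (hf (-1)).trans_tendsto (tendsto_rpow_neg_atTop one_pos)

end RapidlyDecreasing

end RapidlyDecreasing

section HasLeadingTerm

variable {E A : Type*} [NormedAddCommGroup E] [NormedSpace ℝ E] [NormedRing A] [NormedAlgebra ℝ A]

/-- `f x = b x ^ s + o(x ^ s)` as `x → 0⁺`. The coefficient `b` is allowed to vanish. -/
def HasLeadingTerm (f : ℝ → E) (s : ℝ) (b : E) : Prop :=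
  Tendsto (fun x => x ^ (-s) • f x) (𝓝[>] 0) (𝓝 b)

lemma hasLeadingTerm_rpow (s : ℝ) : HasLeadingTerm (fun x : ℝ => x ^ s) s 1 := by
  refine tendsto_const_nhds.congr' ?_
  filter_upwards [self_mem_nhdsWithin] with x (hx : 0 < x)
  rw [smul_eq_mul, ← Real.rpow_add hx, neg_add_cancel, Real.rpow_zero]

lemma integrableAtFilter_rpow_nhdsGT_zero_iff {s : ℝ} :
    IntegrableAtFilter (fun x : ℝ => x ^ s) (𝓝[>] 0) ↔ -1 < s := by
  refine ⟨fun ⟨S, hS, hint⟩ => ?_, fun hs => ⟨Ioo 0 1, Ioo_mem_nhdsGT one_pos,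
    (intervalIntegral.integrableOn_Ioo_rpow_iff one_pos).2 hs⟩⟩
  obtain ⟨δ, hδ, hsub⟩ := mem_nhdsGT_iff_exists_Ioo_subset.1 hS
  exact (intervalIntegral.integrableOn_Ioo_rpow_iff hδ).1 (hint.mono_set hsub)

namespace HasLeadingTerm

variable {f g : ℝ → E} {s : ℝ} {b c : E}

lemma of_tendsto (h : Tendsto f (𝓝[>] 0) (𝓝 b)) : HasLeadingTerm f 0 b := by
  simpa [HasLeadingTerm] using h

lemma isBigO (h : HasLeadingTerm f s b) : f =O[𝓝[>] 0] fun x => x ^ s := by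
  have hf : (fun x => x ^ s • x ^ (-s) • f x) =ᶠ[𝓝[>] 0] f := by
    filter_upwards [self_mem_nhdsWithin] with x (hx : 0 < x)
    rw [smul_smul, ← Real.rpow_add hx, add_neg_cancel, Real.rpow_zero, one_smul]
  refine hf.symm.trans_isBigO ?_
  simpa using (isBigO_refl (fun x : ℝ => x ^ s) (𝓝[>] 0)).smul (h.isBigO_one ℝ)

lemma rpow_isBigO (h : HasLeadingTerm f s b) (hb : b ≠ 0) :
    (fun x => x ^ s) =O[𝓝[>] 0] f := by
  have hone : (fun _ => (1 : ℝ)) =O[𝓝[>] 0] fun x => x ^ (-s) • f x :=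
    isBigO_const_left_iff_pos_le_norm one_ne_zero |>.2 ⟨‖b‖ / 2, by positivity,
      h.norm.eventually_const_le (half_lt_self (norm_pos_iff.2 hb))⟩
  refine (isBigO_refl (fun x : ℝ => x ^ s) _ |>.smul hone).congr' (by simp) ?_
  filter_upwards [self_mem_nhdsWithin] with x (hx : 0 < x)
  rw [smul_smul, ← Real.rpow_add hx, add_neg_cancel, Real.rpow_zero, one_smul]

lemma add (hf : HasLeadingTerm f s b) (hg : HasLeadingTerm g s c) :
    HasLeadingTerm (f + g) s (b + c) := by
  simpa [HasLeadingTerm] using Tendsto.add hf hg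

lemma mul {f g : ℝ → A} {s t : ℝ} {b c : A} (hf : HasLeadingTerm f s b)
    (hg : HasLeadingTerm g t c) : HasLeadingTerm (f * g) (s + t) (b * c) := by
  refine (Tendsto.mul hf hg).congr' ?_
  filter_upwards [self_mem_nhdsWithin] with x (hx : 0 < x)
  rw [smul_mul_smul_comm, ← Real.rpow_add hx, neg_add, Pi.mul_apply]

lemma deriv_mul {f f' g g' : ℝ → A} {s t : ℝ} {b c : A} (hf : HasLeadingTerm f s b)
    (hf' : HasLeadingTerm f' (s - 1) (s • b)) (hg : HasLeadingTerm g t c)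
    (hg' : HasLeadingTerm g' (t - 1) (t • c)) :
    HasLeadingTerm (f' * g + f * g') (s + t - 1) ((s + t) • (b * c)) := by
  have hf'g := hf'.mul hg
  have hfg' := hf.mul hg'
  rw [sub_add_eq_add_sub, smul_mul_assoc] at hf'g
  rw [← add_sub_assoc, mul_smul_comm] at hfg'
  rw [add_smul]
  exact hf'g.add hfg'

lemma ofReal {f : ℝ → ℝ} {s b : ℝ} (h : HasLeadingTerm f s b) :
    HasLeadingTerm (fun x => (f x : ℂ)) s (b : ℂ) := by
  simpa [HasLeadingTerm, Function.comp_def] using (continuous_ofReal.tendsto b).comp h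

lemma tendsto_zero (h : HasLeadingTerm f s b) (hs : 0 < s) : Tendsto f (𝓝[>] 0) (𝓝 0) := by
  refine h.isBigO.trans_tendsto (Tendsto.mono_left ?_ nhdsWithin_le_nhds)
  simpa [Real.zero_rpow hs.ne'] using (Real.continuousAt_rpow_const 0 s (.inr hs.le)).tendsto

lemma zero_of_lt {t : ℝ} (h : HasLeadingTerm f t b) (hst : s < t) : HasLeadingTerm f s 0 := by
  have hpow := (hasLeadingTerm_rpow (t - s)).tendsto_zero (sub_pos.2 hst)
  refine (zero_smul ℝ b ▸ hpow.smul h).congr' ?_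
  filter_upwards [self_mem_nhdsWithin] with x (hx : 0 < x)
  rw [smul_smul, ← Real.rpow_add hx]
  ring_nf

lemma not_integrableOn (h : HasLeadingTerm f s b) (hb : b ≠ 0) (hs : s ≤ -1) :
    ¬ IntegrableOn f (Ioi 0) := by
  intro hint
  have hmeas : StronglyMeasurableAtFilter (fun x : ℝ => x ^ s) (𝓝[>] 0) :=
    Measurable.stronglyMeasurable (by fun_prop) |>.stronglyMeasurableAtFilter
  have hpow : IntegrableAtFilter (fun x : ℝ => x ^ s) (𝓝[>] 0) :=
    (h.rpow_isBigO hb).integrableAtFilter hmeas ⟨Ioi 0, self_mem_nhdsWithin, hint⟩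
  exact hs.not_gt (integrableAtFilter_rpow_nhdsGT_zero_iff.1 hpow)

lemma integrableOn (h : HasLeadingTerm f s b) (hs : -1 < s) (hcont : ContinuousOn f (Ioi 0))
    (hdec : RapidlyDecreasing f) : IntegrableOn f (Ioi 0) := by
  refine integrableOn_Ioi_iff_integrableAtFilter_atTop_nhdsWithin.2 ⟨?_, ?_,
    hcont.locallyIntegrableOn measurableSet_Ioi⟩
  · exact (hdec (-2)).integrableAtFilter
      ⟨Ioi 0, Ioi_mem_atTop 0, hcont.aestronglyMeasurable measurableSet_Ioi⟩
      (integrableAtFilter_rpow_atTop_iff.2 (by norm_num))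
  · exact h.isBigO.integrableAtFilter
      ⟨Ioi 0, self_mem_nhdsWithin, hcont.aestronglyMeasurable measurableSet_Ioi⟩
      (integrableAtFilter_rpow_nhdsGT_zero_iff.2 hs)

end HasLeadingTerm

end HasLeadingTerm

section Taylor

variable {E : Type*} [NormedAddCommGroup E] [NormedSpace ℝ E]

lemma hasDerivAt_iteratedDerivWithin_Ioi {f : ℝ → E} {a x : ℝ}
    (hf : ContDiffOn ℝ (⊤ : ℕ∞) f (Ioi a)) (n : ℕ) (hx : x ∈ Ioi a) :
    HasDerivAt (iteratedDerivWithin n f (Ioi a)) (iteratedDerivWithin (n + 1) f (Ioi a) x) x := by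
  rw [iteratedDerivWithin_succ]
  have hdiff := hf.differentiableOn_iteratedDerivWithin
    (by exact_mod_cast WithTop.coe_lt_top n) (uniqueDiffOn_Ioi a)
  exact (hdiff x hx).hasDerivWithinAt.hasDerivAt (Ioi_mem_nhds hx)

lemma hasLeadingTerm_iff_isLittleO {f : ℝ → E} {s : ℝ} {b : E} :
    HasLeadingTerm f s b ↔ (fun x => f x - x ^ s • b) =o[𝓝[>] 0] fun x => x ^ s := by
  rw [HasLeadingTerm, ← tendsto_sub_nhds_zero_iff, ← isLittleO_one_iff ℝ]
  refine ⟨fun h => ((isBigO_refl (fun x : ℝ => x ^ s) _).smul_isLittleO h).congr' ?_ (by simp),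
    fun h => ((isBigO_refl (fun x : ℝ => x ^ (-s)) _).smul_isLittleO h).congr' ?_ ?_⟩
  all_goals filter_upwards [self_mem_nhdsWithin] with x (hx : 0 < x)
  · simp [smul_sub, smul_smul, ← Real.rpow_add hx]
  · simp [smul_sub, smul_smul, ← Real.rpow_add hx]
  · simp [← Real.rpow_add hx]

lemma isLittleO_rpow_add_one_of_hasDerivAt {f f' : ℝ → E} {s : ℝ} (hs : 0 ≤ s)
    (hderiv : ∀ᶠ x in 𝓝[>] 0, HasDerivAt f (f' x) x) (hf : Tendsto f (𝓝[>] 0) (𝓝 0))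
    (hf' : f' =o[𝓝[>] 0] fun x => x ^ s) : f =o[𝓝[>] 0] fun x => x ^ (s + 1) := by
  refine isLittleO_iff.2 fun ε hε => ?_
  obtain ⟨δ, hδ, hsub⟩ :=
    mem_nhdsGT_iff_exists_Ioo_subset.1 (hderiv.and (isLittleO_iff.1 hf' hε))
  filter_upwards [Ioo_mem_nhdsGT hδ] with x hx
  rw [Real.norm_of_nonneg (Real.rpow_nonneg hx.1.le _)]
  have hincr : ∀ᶠ a in 𝓝[>] 0, ‖f x - f a‖ ≤ ε * x ^ (s + 1) := by
    filter_upwards [Ioo_mem_nhdsGT hx.1] with a ha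
    have hIcc {t : ℝ} (ht : t ∈ Icc a x) : t ∈ Ioo 0 δ :=
      ⟨ha.1.trans_le ht.1, ht.2.trans_lt hx.2⟩
    have hbound (t : ℝ) (ht : t ∈ Icc a x) : ‖f' t‖ ≤ ε * x ^ s := by
      have hpow : t ^ s ≤ x ^ s := Real.rpow_le_rpow (hIcc ht).1.le ht.2 hs
      refine (hsub (hIcc ht)).2.trans ?_
      rw [Real.norm_of_nonneg (Real.rpow_nonneg (hIcc ht).1.le _)]
      gcongr
    calc ‖f x - f a‖ ≤ ε * x ^ s * ‖x - a‖ :=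
          (convex_Icc a x).norm_image_sub_le_of_norm_hasDerivWithin_le
            (fun t ht => (hsub (hIcc ht)).1.hasDerivWithinAt) hbound
            (left_mem_Icc.2 ha.2.le) (right_mem_Icc.2 ha.2.le)
      _ ≤ ε * x ^ s * x := by
          rw [Real.norm_of_nonneg (sub_nonneg.2 ha.2.le)]
          have := hx.1
          gcongr
          exact sub_le_self _ ha.1.le
      _ = ε * x ^ (s + 1) := by rw [Real.rpow_add_one hx.1.ne', mul_assoc]
  exact le_of_tendsto (by simpa using (hf.const_sub (f x)).norm) hincr

lemma HasLeadingTerm.of_hasDerivAt {f f' : ℝ → E} {s : ℝ} {c : E} (hs : 0 ≤ s)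
    (hderiv : ∀ᶠ x in 𝓝[>] 0, HasDerivAt f (f' x) x) (hf : Tendsto f (𝓝[>] 0) (𝓝 0))
    (hf' : HasLeadingTerm f' s c) : HasLeadingTerm f (s + 1) ((s + 1)⁻¹ • c) := by
  have hs' : s + 1 ≠ 0 := by positivity
  rw [hasLeadingTerm_iff_isLittleO] at hf' ⊢
  have hmono : ∀ᶠ x : ℝ in 𝓝[>] 0,
      HasDerivAt (fun x => x ^ (s + 1) • (s + 1)⁻¹ • c) (x ^ s • c) x := by
    filter_upwards [self_mem_nhdsWithin] with x (hx : 0 < x)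
    refine ((Real.hasDerivAt_rpow_const (p := s + 1) (.inl hx.ne')).smul_const _).congr_deriv ?_
    rw [smul_smul, add_sub_cancel_right, mul_right_comm, mul_inv_cancel₀ hs', one_mul]
  have hmono_zero : Tendsto (fun x : ℝ => x ^ (s + 1) • (s + 1)⁻¹ • c) (𝓝[>] 0) (𝓝 0) := by
    have := (hasLeadingTerm_rpow (s + 1)).tendsto_zero (by positivity)
    simpa using this.smul_const ((s + 1)⁻¹ • c)
  exact isLittleO_rpow_add_one_of_hasDerivAt hs (hderiv.and hmono |>.mono fun x h => h.1.sub h.2)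
    (by simpa using hf.sub hmono_zero) hf'

lemma HasLeadingTerm.zero_of_isBigO_one {f : ℝ → E} (hf : f =O[𝓝[>] 0] fun _ => (1 : ℝ)) :
    HasLeadingTerm f (-1) 0 := by
  have hid : (fun x : ℝ => x) =o[𝓝[>] 0] fun _ => (1 : ℝ) :=
    (isLittleO_one_iff ℝ).2 (tendsto_id.mono_left nhdsWithin_le_nhds)
  simpa [HasLeadingTerm, isLittleO_one_iff] using hid.smul_isBigO hf

variable [CompleteSpace E]

lemma exists_tendsto_nhdsGT_of_isBigO_deriv {f f' : ℝ → E} {a : ℝ}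
    (hderiv : ∀ᶠ x in 𝓝[>] a, HasDerivAt f (f' x) x)
    (hf' : f' =O[𝓝[>] a] fun _ => (1 : ℝ)) : ∃ b, Tendsto f (𝓝[>] a) (𝓝 b) := by
  obtain ⟨C, hC⟩ := hf'.bound
  obtain ⟨δ, hδ, hsub⟩ := mem_nhdsGT_iff_exists_Ioo_subset.1 (hderiv.and hC)
  have hlip : LipschitzOnWith C.toNNReal f (Ioo a δ) :=
    (convex_Ioo a δ).lipschitzOnWith_of_nnnorm_hasDerivWithin_le
      (fun x hx => (hsub hx).1.hasDerivWithinAt)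
      fun x hx => NNReal.le_toNNReal_of_coe_le (by simpa using (hsub hx).2)
  exact cauchy_map_iff_exists_tendsto.1 <| (cauchy_nhds.mono nhdsWithin_le_nhds).map_of_le
    hlip.uniformContinuousOn (le_principal_iff.2 (Ioo_mem_nhdsGT hδ))

lemma exists_hasLeadingTerm_of_hasDerivAt (N : ℕ) {f : ℕ → ℝ → E}
    (hderiv : ∀ j, ∀ᶠ x in 𝓝[>] 0, HasDerivAt (f j) (f (j + 1) x) x)
    (hbdd : ∀ j, f j =O[𝓝[>] 0] fun _ => (1 : ℝ)) :
    ∃ (n : ℕ) (b : E), (b ≠ 0 ∨ N ≤ n) ∧ HasLeadingTerm (f 0) n b ∧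
      HasLeadingTerm (f 1) (n - 1) ((n : ℝ) • b) := by
  induction N generalizing f with
  | zero =>
    obtain ⟨b, hb⟩ := exists_tendsto_nhdsGT_of_isBigO_deriv (hderiv 0) (hbdd 1)
    exact ⟨0, b, .inr le_rfl, by simpa using HasLeadingTerm.of_tendsto hb,
      by simpa using HasLeadingTerm.zero_of_isBigO_one (hbdd 1)⟩
  | succ N ih =>
    obtain ⟨b, hb⟩ := exists_tendsto_nhdsGT_of_isBigO_deriv (hderiv 0) (hbdd 1)
    rcases ne_or_eq b 0 with hb0 | rfl
    · exact ⟨0, b, .inl hb0, by simpa using HasLeadingTerm.of_tendsto hb,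
        by simpa using HasLeadingTerm.zero_of_isBigO_one (hbdd 1)⟩
    · obtain ⟨n, c, hn, hc, -⟩ := ih (fun j => hderiv (j + 1)) fun j => hbdd (j + 1)
      have hn0 : (n : ℝ) + 1 ≠ 0 := by positivity
      refine ⟨n + 1, ((n : ℝ) + 1)⁻¹ • c, ?_, ?_, ?_⟩
      · simpa [hn0] using hn
      · simpa using hc.of_hasDerivAt n.cast_nonneg (hderiv 0) hb
      · simpa [smul_smul, mul_inv_cancel₀ hn0] using hc

end Taylor

section IntegrationByParts

variable {A : Type*} [NormedRing A] [NormedAlgebra ℝ A] [CompleteSpace A]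

lemma integral_Ioi_mul_deriv_eq_neg_of_hasLeadingTerm {u u' v v' : ℝ → A} {r t k k' : ℝ} {a b : A}
    (hu : ∀ x ∈ Ioi 0, HasDerivAt u (u' x) x) (hv : ∀ x ∈ Ioi 0, HasDerivAt v (v' x) x)
    (hu'_cont : ContinuousOn u' (Ioi 0)) (hv'_cont : ContinuousOn v' (Ioi 0))
    (hu_zero : HasLeadingTerm u r a) (hu'_zero : HasLeadingTerm u' (r - 1) (r • a))
    (hv_zero : HasLeadingTerm v t b) (hv'_zero : HasLeadingTerm v' (t - 1) (t • b))
    (hu_top : u =O[atTop] fun x => x ^ k) (hu'_top : u' =O[atTop] fun x => x ^ k')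
    (hv_top : RapidlyDecreasing v) (hv'_top : RapidlyDecreasing v')
    (hrt : 0 < r + t ∨ r ≠ 0 ∧ t ≠ 0 ∧ a * b ≠ 0) :
    ∫ x in Ioi 0, u x * v' x = -∫ x in Ioi 0, u' x * v x := by
  have huv' : HasLeadingTerm (u * v') (r + t - 1) (t • (a * b)) := by
    simpa [add_sub_assoc] using hu_zero.mul hv'_zero
  have hu'v : HasLeadingTerm (u' * v) (r + t - 1) (r • (a * b)) := by
    simpa [sub_add_eq_add_sub] using hu'_zero.mul hv_zero
  rcases lt_or_ge 0 (r + t) with hpos | hneg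
  · have hu_cont : ContinuousOn u (Ioi 0) := fun x hx => (hu x hx).continuousAt.continuousWithinAt
    have hv_cont : ContinuousOn v (Ioi 0) := fun x hx => (hv x hx).continuousAt.continuousWithinAt
    have hexp : -1 < r + t - 1 := by linarith
    rw [integral_Ioi_mul_deriv_eq_deriv_mul hu hv
      (huv'.integrableOn hexp (hu_cont.mul hv'_cont) (hv'_top.mul_left hu_top))
      (hu'v.integrableOn hexp (hu'_cont.mul hv_cont) (hv_top.mul_left hu'_top))
      ((hu_zero.mul hv_zero).tendsto_zero hpos) (hv_top.mul_left hu_top).tendsto_zero]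
    simp
  -- Neither integrand is integrable, so both Bochner integrals are `0` by convention.
  · obtain ⟨hr, ht, hab⟩ := hrt.resolve_left hneg.not_gt
    have hexp : r + t - 1 ≤ -1 := by linarith
    have huv'_undef := integral_undef (huv'.not_integrableOn (smul_ne_zero ht hab) hexp)
    have hu'v_undef := integral_undef (hu'v.not_integrableOn (smul_ne_zero hr hab) hexp)
    simp only [Pi.mul_apply] at huv'_undef hu'v_undef
    rw [huv'_undef, hu'v_undef, neg_zero]

end IntegrationByParts

section BesselWeight

/-- The weight `x ^ (2 * l) * 𝒞_l(-c x²) = c ^ (-l / 2) * x ^ l * J_l(2√c x)` for `c, x > 0`. In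
this normalisation raising the order is integration: `dW_{l+1} = 2 x W_l dx`. -/
noncomputable def besselWeight (l c x : ℝ) : ℝ :=
  x ^ (2 * l) * besselClifford l (-(c * x ^ 2))

lemma hasDerivAt_besselWeight_add_one (l c : ℝ) {x : ℝ} (hx : 0 < x) :
    HasDerivAt (besselWeight (l + 1) c) (2 * x * besselWeight l c x) x := by
  have hpow := Real.hasDerivAt_rpow_const (p := 2 * (l + 1)) (.inl hx.ne')
  have hC := (hasDerivAt_besselClifford (l + 1) (-(c * x ^ 2))).comp x
    ((hasDerivAt_pow 2 x).const_mul c).neg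
  refine (hpow.mul hC).congr_deriv ?_
  have hrec := besselClifford_eq l (-(c * x ^ 2))
  have hexp : x ^ (2 * (l + 1)) = x ^ (2 * l) * x ^ 2 := by
    rw [mul_add, mul_one, ← Real.rpow_add_natCast hx.ne']; norm_num
  have hexp' : x ^ (2 * (l + 1) - 1) = x ^ (2 * l) * x := by
    rw [← Real.rpow_add_one hx.ne']; ring_nf
  rw [besselWeight, hrec, hexp, hexp', show l + 1 + 1 = l + 2 by ring]
  simp only [Function.comp_apply, Pi.neg_apply]
  push_cast
  ring

lemma continuousOn_besselWeight (l c : ℝ) : ContinuousOn (besselWeight l c) (Ioi 0) := by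
  have hC : Continuous (besselClifford l) :=
    continuous_iff_continuousAt.2 fun w => (hasDerivAt_besselClifford l w).continuousAt
  exact (continuousOn_id.rpow_const fun x hx => .inl (ne_of_gt hx)).mul
    (hC.comp (by fun_prop)).continuousOn

lemma hasLeadingTerm_besselWeight (l c : ℝ) :
    HasLeadingTerm (besselWeight l c) (2 * l) (besselClifford l 0) := by
  have hC : ContinuousAt (fun x : ℝ => besselClifford l (-(c * x ^ 2))) 0 :=
    (hasDerivAt_besselClifford l _).continuousAt.comp (by fun_prop)
  have hC_zero : Tendsto (fun x : ℝ => besselClifford l (-(c * x ^ 2))) (𝓝[>] 0)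
      (𝓝 (besselClifford l 0)) := by
    simpa using hC.tendsto.mono_left nhdsWithin_le_nhds
  have hprod := (hasLeadingTerm_rpow (2 * l)).mul (.of_tendsto hC_zero)
  rwa [add_zero, one_mul] at hprod

lemma isBigO_besselWeight {l c : ℝ} (hl : -1 < l) (hc : 0 < c) :
    besselWeight l c =O[atTop] fun x => x ^ (2 * l + 2) := by
  have hsq : Tendsto (fun x : ℝ => c * x ^ 2) atTop atTop :=
    (tendsto_pow_atTop two_ne_zero).const_mul_atTop hc
  have hC : (fun x : ℝ => besselClifford l (-(c * x ^ 2))) =O[atTop] fun x => x ^ 2 :=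
    ((isBigO_besselClifford_neg hl).comp_tendsto hsq).trans (isBigO_const_mul_self c _ _)
  refine ((isBigO_refl (fun x : ℝ => x ^ (2 * l)) _).mul hC).trans_eventuallyEq ?_
  filter_upwards [eventually_gt_atTop 0] with x hx
  rw [Real.rpow_add hx, Real.rpow_two]

lemma hasLeadingTerm_deriv_besselWeight (l c : ℝ) :
    HasLeadingTerm (fun x => 2 * x * besselWeight l c x) (2 * (l + 1) - 1)
      ((2 * (l + 1)) • besselClifford (l + 1) 0) := by
  have hlin : HasLeadingTerm (fun x : ℝ => 2 * x) 1 2 := by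
    simpa [Pi.mul_def] using
      (HasLeadingTerm.of_tendsto tendsto_const_nhds).mul (hasLeadingTerm_rpow 1)
  have hprod := hlin.mul (hasLeadingTerm_besselWeight l c)
  rwa [besselClifford_eq, zero_mul, add_zero, ← mul_assoc,
    show 1 + 2 * l = 2 * (l + 1) - 1 by ring] at hprod

lemma isBigO_deriv_besselWeight {l c : ℝ} (hl : -1 < l) (hc : 0 < c) :
    (fun x => 2 * x * besselWeight l c x) =O[atTop] fun x => x ^ (2 * l + 3) := by
  refine ((isBigO_const_mul_self 2 (fun x : ℝ => x) _).mul
    (isBigO_besselWeight hl hc)).trans_eventuallyEq ?_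
  filter_upwards [eventually_gt_atTop 0] with x hx
  rw [mul_comm, ← Real.rpow_add_one hx.ne']
  ring_nf

end BesselWeight

section ChirpPow

/-- The Gaussian phase `e^{-(i/2) κ x²}`. -/
noncomputable def chirp (κ x : ℝ) : ℂ :=
  exp (-(I / 2) * (x : ℂ) ^ 2 * (κ : ℂ))

/-- The function `e^{-(i/2) κ x²} x ^ p` conjugating `d/dx` into `fracMneg`. -/
noncomputable def chirpPow (κ p x : ℝ) : ℂ :=
  chirp κ x * ((x ^ p : ℝ) : ℂ)

lemma continuous_chirp (κ : ℝ) : Continuous (chirp κ) := by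
  unfold chirp
  fun_prop

lemma norm_chirp (κ x : ℝ) : ‖chirp κ x‖ = 1 := by
  rw [chirp, show -(I / 2) * (x : ℂ) ^ 2 * (κ : ℂ) = ((-(x ^ 2 * κ / 2) : ℝ) : ℂ) * I by
    push_cast; ring]
  exact norm_exp_ofReal_mul_I _

lemma hasDerivAt_chirp (κ x : ℝ) : HasDerivAt (chirp κ) (-(I * κ * x) * chirp κ x) x := by
  have hsq : HasDerivAt (fun t : ℝ => (t : ℂ) ^ 2) (2 * x) x := by
    simpa [Pi.pow_def] using (hasDerivAt_id x).ofReal_comp.pow 2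
  refine ((hsq.const_mul (-(I / 2))).mul_const (κ : ℂ)).cexp.congr_deriv ?_
  rw [chirp]
  ring

lemma hasDerivAt_chirpPow (κ p : ℝ) {x : ℝ} (hx : 0 < x) :
    HasDerivAt (chirpPow κ p) (p * chirpPow κ (p - 1) x - I * κ * chirpPow κ (p + 1) x) x := by
  have hpow := (Real.hasDerivAt_rpow_const (p := p) (.inl hx.ne')).ofReal_comp
  refine ((hasDerivAt_chirp κ x).mul hpow).congr_deriv ?_
  rw [chirpPow, chirpPow, Real.rpow_add_one hx.ne']
  push_cast
  ring

lemma continuousOn_chirpPow (κ p : ℝ) : ContinuousOn (chirpPow κ p) (Ioi 0) :=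
  fun _ hx => (hasDerivAt_chirpPow κ p hx).continuousAt.continuousWithinAt

lemma isBigO_chirpPow (κ p : ℝ) : chirpPow κ p =O[atTop] fun x => x ^ p :=
  isBigO_of_le _ fun x => by simp [chirpPow, norm_chirp]

lemma hasLeadingTerm_chirpPow (κ p : ℝ) : HasLeadingTerm (chirpPow κ p) p 1 := by
  have hchirp : Tendsto (chirp κ) (𝓝[>] 0) (𝓝 1) := by
    simpa [chirp] using ((continuous_chirp κ).tendsto 0).mono_left nhdsWithin_le_nhds
  have hprod := (HasLeadingTerm.of_tendsto hchirp).mul (hasLeadingTerm_rpow p).ofReal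
  rwa [zero_add, one_mul, ofReal_one] at hprod

lemma hasLeadingTerm_deriv_chirpPow (κ p : ℝ) :
    HasLeadingTerm (fun x => p * chirpPow κ (p - 1) x - I * κ * chirpPow κ (p + 1) x)
      (p - 1) (p • 1) := by
  have hconst (a : ℂ) : HasLeadingTerm (fun _ => a) 0 a := .of_tendsto tendsto_const_nhds
  have hlow := (hconst p).mul (hasLeadingTerm_chirpPow κ (p - 1))
  have hhigh := (hconst (-(I * κ))).mul <|
    (hasLeadingTerm_chirpPow κ (p + 1)).zero_of_lt (show p - 1 < p + 1 by linarith)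
  simpa [sub_eq_add_neg, Pi.mul_def, Pi.add_def] using hlow.add hhigh

lemma isBigO_deriv_chirpPow (κ p : ℝ) :
    (fun x => p * chirpPow κ (p - 1) x - I * κ * chirpPow κ (p + 1) x) =O[atTop]
      fun x => x ^ (p + 1) := by
  have hmono : (fun x : ℝ => x ^ (p - 1)) =O[atTop] fun x => x ^ (p + 1) := by
    refine .of_bound' ?_
    filter_upwards [eventually_ge_atTop 1] with x hx
    have : 0 ≤ x := zero_le_one.trans hx
    rw [Real.norm_of_nonneg (by positivity), Real.norm_of_nonneg (by positivity)]
    exact Real.rpow_le_rpow_of_exponent_le hx (by linarith)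
  exact (((isBigO_chirpPow κ _).trans hmono).const_mul_left _).sub
    ((isBigO_chirpPow κ _).const_mul_left _)

end ChirpPow

section HankelKernel

lemma mul_rpow_of_pos_left {x : ℝ} (hx : 0 < x) (s r : ℝ) : (x * s) ^ r = x ^ r * s ^ r := by
  rcases lt_or_ge s 0 with hs | hs
  · rw [Real.rpow_def_of_neg (mul_neg_of_pos_of_neg hx hs), Real.rpow_def_of_neg hs,
      Real.rpow_def_of_pos hx, Real.log_mul hx.ne' hs.ne, add_mul, Real.exp_add]
    ring
  · exact Real.mul_rpow hx.le hs

lemma integral_besselWeight_mul_deriv {l c κ p t : ℝ} {b : ℂ} {ψ ψ' : ℝ → ℂ} (hl : -1 < l)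
    (hc : 0 < c) (hψ : ∀ x ∈ Ioi 0, HasDerivAt ψ (ψ' x) x) (hψ'_cont : ContinuousOn ψ' (Ioi 0))
    (hψ_zero : HasLeadingTerm ψ t b) (hψ'_zero : HasLeadingTerm ψ' (t - 1) (t • b))
    (hψ_top : RapidlyDecreasing ψ) (hψ'_top : RapidlyDecreasing ψ')
    (hpt : b ≠ 0 ∨ 0 < 2 * (l + 1) + (p + t)) :
    ∫ x in Ioi 0, (besselWeight (l + 1) c x : ℂ) * deriv (chirpPow κ p * ψ) x =
      -∫ x in Ioi 0, ((2 * x * besselWeight l c x : ℝ) : ℂ) * (chirpPow κ p * ψ) x := by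
  have hψ_cont : ContinuousOn ψ (Ioi 0) := fun x hx => (hψ x hx).continuousAt.continuousWithinAt
  have hχ (x : ℝ) (hx : x ∈ Ioi 0) := hasDerivAt_chirpPow κ p hx
  have hχ'_cont := ((continuousOn_chirpPow κ (p - 1)).const_mul (p : ℂ)).sub
    ((continuousOn_chirpPow κ (p + 1)).const_mul (I * κ))
  have hχ_zero := hasLeadingTerm_chirpPow κ p
  have hχ'_zero := hasLeadingTerm_deriv_chirpPow κ p
  have hv (x : ℝ) (hx : x ∈ Ioi 0) := (hχ x hx).mul (hψ x hx)
  have hboundary : 0 < 2 * (l + 1) + (p + t) ∨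
      2 * (l + 1) ≠ 0 ∧ p + t ≠ 0 ∧ (besselClifford (l + 1) 0 : ℂ) * (1 * b) ≠ 0 := by
    refine or_iff_not_imp_left.2 fun hneg => ⟨by linarith, by linarith, ?_⟩
    exact mul_ne_zero (ofReal_ne_zero.2 (besselClifford_zero_ne_zero (by linarith)))
      (by simpa using hpt.resolve_right hneg)
  rw [setIntegral_congr_fun measurableSet_Ioi fun x hx => by rw [(hv x hx).deriv]]
  exact integral_Ioi_mul_deriv_eq_neg_of_hasLeadingTerm
    (fun x hx => (hasDerivAt_besselWeight_add_one l c hx).ofReal_comp) hv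
    (by have := continuousOn_besselWeight l c; fun_prop)
    ((hχ'_cont.mul hψ_cont).add ((continuousOn_chirpPow κ p).mul hψ'_cont))
    (hasLeadingTerm_besselWeight (l + 1) c).ofReal
    (by simpa using (hasLeadingTerm_deriv_besselWeight l c).ofReal)
    (hχ_zero.mul hψ_zero) (hχ_zero.deriv_mul hχ'_zero hψ_zero hψ'_zero)
    (isBigO_ofReal_left.2 (isBigO_besselWeight (by linarith) hc))
    (isBigO_ofReal_left.2 (isBigO_deriv_besselWeight hl hc))
    (hψ_top.mul_left (isBigO_chirpPow κ p))
    ((hψ_top.mul_left (isBigO_deriv_chirpPow κ p)).add (hψ'_top.mul_left (isBigO_chirpPow κ p)))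
    hboundary

/-- The factor of `fracHankelInv l μ θ g y` that does not depend on the integration variable, once
`J_l(x s)` with `s = y / sin θ` is expressed through `besselWeight l (s² / 4) x`. -/
noncomputable def fracHankelConst (l μ θ y : ℝ) : ℂ :=
  exp (-I * ((1 + l : ℝ) : ℂ) * ((θ - Real.pi / 2 : ℝ) : ℂ)) /
      ((Real.sin θ ^ (1 + μ) : ℝ) : ℂ) * chirp (Real.cot θ) y *
    (((y * (Real.sin θ)⁻¹) ^ (-μ) * (y * (Real.sin θ)⁻¹ / 2) ^ l : ℝ) : ℂ)

lemma fracHankelConst_add_one (l μ : ℝ) {θ y : ℝ} (hθ : Real.sin θ ≠ 0) (hy : y ≠ 0) :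
    fracHankelConst (l + 1) μ θ y =
      fracHankelConst l μ θ y * exp (-I * ((θ - Real.pi / 2 : ℝ) : ℂ)) *
        ((y : ℂ) * (Real.sin θ : ℂ)⁻¹ / 2) := by
  have hs : y * (Real.sin θ)⁻¹ / 2 ≠ 0 := by positivity
  have hphase : exp (-I * ((1 + (l + 1) : ℝ) : ℂ) * ((θ - Real.pi / 2 : ℝ) : ℂ)) =
      exp (-I * ((1 + l : ℝ) : ℂ) * ((θ - Real.pi / 2 : ℝ) : ℂ)) *
        exp (-I * ((θ - Real.pi / 2 : ℝ) : ℂ)) := by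
    rw [← exp_add]
    push_cast
    ring_nf
  rw [fracHankelConst, fracHankelConst, hphase, Real.rpow_add_one hs]
  push_cast
  ring

lemma rpow_neg_mul_besselJ_mul_rpow (l μ : ℝ) {x s : ℝ} (hx : 0 < x) (hs : s ≠ 0) :
    (x * s) ^ (-μ) * besselJ l (x * s) * x ^ (1 + 2 * μ) =
      s ^ (-μ) * (s / 2) ^ l * (besselWeight l (s ^ 2 / 4) x * x ^ (1 + μ - l)) := by
  have hexp : x ^ (-μ) * x ^ l * x ^ (1 + 2 * μ) = x ^ (2 * l) * x ^ (1 + μ - l) := by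
    simp only [← Real.rpow_add hx]
    ring_nf
  rw [besselJ_eq_rpow_mul_besselClifford l (mul_ne_zero hx.ne' hs), besselWeight,
    mul_div_assoc x s 2, mul_rpow_of_pos_left hx, mul_rpow_of_pos_left hx,
    show (x * s) ^ 2 / 4 = s ^ 2 / 4 * x ^ 2 by ring]
  linear_combination
    s ^ (-μ) * (s / 2) ^ l * besselClifford l (-(s ^ 2 / 4 * x ^ 2)) * hexp

lemma fracHankelInv_eq (l μ : ℝ) {θ y : ℝ} (hθ : Real.sin θ ≠ 0) (hy : y ≠ 0) (g : ℝ → ℂ) :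
    fracHankelInv l μ θ g y = fracHankelConst l μ θ y *
      ∫ x in Ioi 0, (besselWeight l ((y * (Real.sin θ)⁻¹) ^ 2 / 4) x : ℂ) *
        (chirpPow (Real.cot θ) (1 + μ - l) x * g x) := by
  rw [fracHankelInv, ← integral_const_mul]
  refine setIntegral_congr_fun measurableSet_Ioi fun x (hx : 0 < x) => ?_
  have hs : y * (Real.sin θ)⁻¹ ≠ 0 := by positivity
  have hchirp : exp (-(I / 2) * ((x : ℂ) ^ 2 + (y : ℂ) ^ 2) * (Real.cot θ : ℂ)) =
      chirp (Real.cot θ) x * chirp (Real.cot θ) y := by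
    rw [chirp, chirp, ← exp_add]
    ring_nf
  have hkernel := congrArg ((↑) : ℝ → ℂ) (rpow_neg_mul_besselJ_mul_rpow l μ hx hs)
  simp only [ofReal_mul] at hkernel
  simp only [fracHankelConst, chirpPow, hchirp, mul_assoc x y, ofReal_mul]
  linear_combination (exp (-I * ((1 + l : ℝ) : ℂ) * ((θ - Real.pi / 2 : ℝ) : ℂ)) /
    ((Real.sin θ ^ (1 + μ) : ℝ) : ℂ) * chirp (Real.cot θ) x * chirp (Real.cot θ) y * g x) * hkernel

lemma fracMneg_eq (ν μ θ : ℝ) (ψ : ℝ → ℂ) {x : ℝ} (hx : 0 < x) :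
    fracMneg ν μ θ ψ x = -(exp ((I / 2) * (x : ℂ) ^ 2 * (Real.cot θ : ℂ)) *
      ((x ^ (ν - μ) : ℝ) : ℂ) * deriv (chirpPow (Real.cot θ) (μ - ν) * ψ) x) := by
  have hconj : chirpPow (Real.cot θ) (μ - ν) * ψ =ᶠ[𝓝 x] fun t : ℝ =>
      exp (-(I / 2) * (t : ℂ) ^ 2 * (Real.cot θ : ℂ)) * (t : ℂ) ^ ((μ - ν : ℝ) : ℂ) * ψ t := by
    filter_upwards [Ioi_mem_nhds hx] with t (ht : 0 < t)
    rw [← ofReal_cpow ht.le, Pi.mul_apply, chirpPow, chirp]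
  rw [hconj.deriv_eq, ofReal_cpow hx.le, fracMneg]

lemma chirpPow_mul_fracMneg (ν μ θ : ℝ) (ψ : ℝ → ℂ) {x : ℝ} (hx : 0 < x) :
    chirpPow (Real.cot θ) (μ - ν) x * fracMneg ν μ θ ψ x =
      -deriv (chirpPow (Real.cot θ) (μ - ν) * ψ) x := by
  have hphase : chirp (Real.cot θ) x * exp ((I / 2) * (x : ℂ) ^ 2 * (Real.cot θ : ℂ)) = 1 := by
    rw [chirp, ← exp_add, ← exp_zero]
    ring_nf
  have hpow : ((x ^ (μ - ν) : ℝ) : ℂ) * ((x ^ (ν - μ) : ℝ) : ℂ) = 1 := by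
    rw [← ofReal_mul, ← Real.rpow_add hx]
    simp
  rw [fracMneg_eq ν μ θ ψ hx, chirpPow]
  linear_combination (-deriv (chirpPow (Real.cot θ) (μ - ν) * ψ) x) *
    ((x ^ (μ - ν) : ℝ) * (x ^ (ν - μ) : ℝ) * hphase + hpow)

lemma fracHankelInv_add_one_pow_mul_fracMneg (ν μ : ℝ) (q : ℕ) {θ y : ℝ} (hθ : Real.sin θ ≠ 0)
    (hy : y ≠ 0) (ψ : ℝ → ℂ) :
    fracHankelInv (ν + q + 1) μ θ (fun x => (x : ℂ) ^ q * fracMneg ν μ θ ψ x) y =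
      -fracHankelConst (ν + q + 1) μ θ y * ∫ x in Ioi 0,
        (besselWeight (ν + q + 1) ((y * (Real.sin θ)⁻¹) ^ 2 / 4) x : ℂ) *
          deriv (chirpPow (Real.cot θ) (μ - ν) * ψ) x := by
  rw [fracHankelInv_eq _ _ hθ hy, neg_mul, ← mul_neg, ← integral_neg]
  congr 1
  refine setIntegral_congr_fun measurableSet_Ioi fun x (hx : 0 < x) => ?_
  have hpow : chirpPow (Real.cot θ) (1 + μ - (ν + q + 1)) x * (x : ℂ) ^ q =
      chirpPow (Real.cot θ) (μ - ν) x := by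
    rw [chirpPow, chirpPow, mul_assoc, ← ofReal_pow, ← ofReal_mul, ← Real.rpow_add_natCast hx.ne']
    ring_nf
  rw [← mul_neg, ← chirpPow_mul_fracMneg ν μ θ ψ hx, ← hpow]
  ring

lemma two_mul_fracHankelInv_pow_mul (ν μ : ℝ) (q : ℕ) {θ y : ℝ} (hθ : Real.sin θ ≠ 0)
    (hy : y ≠ 0) (ψ : ℝ → ℂ) :
    2 * fracHankelInv (ν + q) μ θ (fun x => (x : ℂ) ^ q * ψ x) y =
      fracHankelConst (ν + q) μ θ y * ∫ x in Ioi 0,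
        ((2 * x * besselWeight (ν + q) ((y * (Real.sin θ)⁻¹) ^ 2 / 4) x : ℝ) : ℂ) *
          (chirpPow (Real.cot θ) (μ - ν) * ψ) x := by
  rw [fracHankelInv_eq _ _ hθ hy, mul_left_comm, ← integral_const_mul]
  congr 1
  refine setIntegral_congr_fun measurableSet_Ioi fun x (hx : 0 < x) => ?_
  have hpow : chirpPow (Real.cot θ) (1 + μ - (ν + q)) x * (x : ℂ) ^ q =
      x * chirpPow (Real.cot θ) (μ - ν) x := by
    rw [chirpPow, chirpPow, mul_left_comm, mul_assoc, ← ofReal_pow, ← ofReal_mul, ← ofReal_mul,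
      mul_comm x, ← Real.rpow_add_natCast hx.ne', ← Real.rpow_add_one hx.ne']
    ring_nf
  simp only [Pi.mul_apply, ofReal_mul, ofReal_ofNat]
  linear_combination 2 * (besselWeight (ν + q) ((y * (Real.sin θ)⁻¹) ^ 2 / 4) x : ℂ) * ψ x * hpow

lemma integral_besselWeight_mul_deriv_of_contDiffOn {l c : ℝ} (hl : -1 < l) (hc : 0 < c)
    (κ p : ℝ) {ψ : ℝ → ℂ} (hψ : ContDiffOn ℝ (⊤ : ℕ∞) ψ (Ioi 0))
    (hdec : ∀ k n : ℕ, ∃ C : ℝ, ∀ x : ℝ, 0 < x →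
      x ^ k * ‖iteratedDerivWithin n ψ (Ioi 0) x‖ ≤ C) :
    ∫ x in Ioi 0, (besselWeight (l + 1) c x : ℂ) * deriv (chirpPow κ p * ψ) x =
      -∫ x in Ioi 0, ((2 * x * besselWeight l c x : ℝ) : ℂ) * (chirpPow κ p * ψ) x := by
  set D : ℕ → ℝ → ℂ := fun n => iteratedDerivWithin n ψ (Ioi 0)
  have hD (n : ℕ) (x : ℝ) (hx : x ∈ Ioi 0) : HasDerivAt (D n) (D (n + 1) x) x :=
    hasDerivAt_iteratedDerivWithin_Ioi hψ n hx
  have hD_top (n : ℕ) : RapidlyDecreasing (D n) := .of_pow_mul_norm_le fun k => hdec k n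
  have hD_bdd (n : ℕ) : D n =O[𝓝[>] 0] fun _ => (1 : ℝ) := by
    obtain ⟨C, hC⟩ := hdec 0 n
    refine .of_bound C (eventually_mem_nhdsWithin.mono fun x hx => ?_)
    simpa [D] using hC x hx
  obtain ⟨N, hN⟩ := exists_nat_gt (-(2 * (l + 1) + p))
  obtain ⟨n, b, hn, hb, hb'⟩ := exists_hasLeadingTerm_of_hasDerivAt N
    (fun j => eventually_mem_nhdsWithin.mono (hD j)) hD_bdd
  have hexp (hNn : N ≤ n) : 0 < 2 * (l + 1) + (p + n) := by
    have : (N : ℝ) ≤ n := mod_cast hNn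
    linarith
  rw [show ψ = D 0 from iteratedDerivWithin_zero.symm]
  exact integral_besselWeight_mul_deriv hl hc (hD 0)
    (fun x hx => (hD 1 x hx).continuousAt.continuousWithinAt) hb hb' (hD_top 0) (hD_top 1)
    (hn.imp_right hexp)

end HankelKernel

theorem stmt_11_general (ν μ θ : ℝ) (q : ℕ) (hν : -1 < ν + q) (hθ : Real.sin θ ≠ 0)
    (ψ : ℝ → ℂ) (hψ : ContDiffOn ℝ (⊤ : ℕ∞) ψ (Set.Ioi 0))
    (hdec : ∀ k n : ℕ, ∃ C : ℝ, ∀ x : ℝ, 0 < x →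
      x ^ k * ‖iteratedDerivWithin n ψ (Set.Ioi 0) x‖ ≤ C) (y : ℝ) (hy : 0 < y) :
    fracHankelInv (ν + q + 1) μ θ (fun x => (x : ℂ) ^ q * fracMneg ν μ θ ψ x) y =
      (y : ℂ) * ((Real.sin θ)⁻¹ : ℂ) * Complex.exp (-I * ((θ - Real.pi / 2 : ℝ) : ℂ)) *
        fracHankelInv (ν + q) μ θ (fun x => (x : ℂ) ^ q * ψ x) y := by
  have hc : 0 < (y * (Real.sin θ)⁻¹) ^ 2 / 4 := by positivity
  rw [fracHankelInv_add_one_pow_mul_fracMneg ν μ q hθ hy.ne',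
    integral_besselWeight_mul_deriv_of_contDiffOn hν hc _ _ hψ hdec,
    fracHankelConst_add_one _ _ hθ hy.ne']
  linear_combination
    (-((y : ℂ) * (Real.sin θ : ℂ)⁻¹ / 2 * exp (-I * ((θ - Real.pi / 2 : ℝ) : ℂ)))) *
      two_mul_fracHankelInv_pow_mul ν μ q hθ hy.ne' ψ

theorem stmt_11 (ν μ θ : ℝ) (hν : -(1 / 2 : ℝ) ≤ ν) (hθ : Real.sin θ ≠ 0)
    (ψ : ℝ → ℂ) (hψ : ContDiffOn ℝ (⊤ : ℕ∞) ψ (Set.Ioi 0))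
    (hdec : ∀ k n : ℕ, ∃ C : ℝ, ∀ x : ℝ, 0 < x →
      x ^ k * ‖iteratedDerivWithin n ψ (Set.Ioi 0) x‖ ≤ C)
    (q : ℕ) :
    ∀ y : ℝ, 0 < y →
      fracHankelInv (ν + q + 1) μ θ (fun x => (x : ℂ) ^ q * fracMneg ν μ θ ψ x) y =
        (y : ℂ) * ((Real.sin θ)⁻¹ : ℂ) * Complex.exp (-I * ((θ - Real.pi / 2 : ℝ) : ℂ)) *
          fracHankelInv (ν + q) μ θ (fun x => (x : ℂ) ^ q * ψ x) y := by
  exact stmt_11_general ν μ θ q (by linarith [q.cast_nonneg (α := ℝ)]) hθ ψ hψ hdec
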